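/- Localization of constrained minimizers under uniform quadratic approximation: let K be a symmetric positive definite real p×p matrix with smallest eigenvalue λ > 0, b ∈ ℝ^p, Q ⊆ ℝ^p a nonempty closed convex set, q(β) = (1/2)βᵀKβ − bᵀβ, and let γ be the unique minimizer of q over Q. Let f : ℝ^p → ℝ be convex, r > 0, and 0 ≤ ε < λr²/2. If |(f(β) − f(γ)) − (q(β) − q(γ))| ≤ ε for every β ∈ Q with ‖β − γ‖ ≤ r, then every β ∈ Q with f(β) ≤ f(γ) satisfies ‖β − γ‖ < r; in particular every minimizer of f over Q lies in the open ball of radius r around γ. -/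

import Mathlib

open Matrix

/-- The Euclidean norm on `ℝ^p`. -/
noncomputable def euclNorm {p : ℕ} (v : Fin p → ℝ) : ℝ :=
  Real.sqrt (∑ i, v i ^ 2)

/-- The quadratic `q(β) = (1/2) βᵀ K β - bᵀ β`. -/
noncomputable def quadObj {p : ℕ} (K : Matrix (Fin p) (Fin p) ℝ)
    (b : Fin p → ℝ) (β : Fin p → ℝ) : ℝ :=
  (1/2) * (β ⬝ᵥ K.mulVec β) - b ⬝ᵥ β

/-!
A uniformly convex `q` with modulus `φ` grows at least like `φ ‖β - γ‖` away from a constrained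
minimizer `γ`; the quadratic `q` is uniformly convex with modulus `φ s = λ s² / 2`. The sublevel set
`{β ∈ Q | f β ≤ f γ}` is convex and contains `γ`, so if it leaves the open ball of radius `r` it
meets the sphere `‖β - γ‖ = r`. There `q` exceeds `q γ` by at least `φ r > ε` while `f` does not
exceed `f γ`, contradicting the approximation.
-/

section UniformConvexity

variable {E : Type*} [NormedAddCommGroup E] [NormedSpace ℝ E] {Q : Set E} {f q : E → ℝ}
  {φ : ℝ → ℝ} {γ β : E} {r ε : ℝ}

theorem add_le_of_uniformConvexOn_of_isMinOn (hq : UniformConvexOn Q φ q) (hγ : γ ∈ Q)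
    (hmin : IsMinOn q Q γ) (hβ : β ∈ Q) : q γ + φ ‖β - γ‖ ≤ q β := by
  have hsegment : ∀ t ∈ Set.Ioo (0 : ℝ) 1, q γ + (1 - t) * φ ‖β - γ‖ ≤ q β := by
    rintro t ⟨ht0, ht1⟩
    have hmem : t • β + (1 - t) • γ ∈ Q :=
      hq.1 hβ hγ ht0.le (sub_nonneg.2 ht1.le) (add_sub_cancel t 1)
    have hchord := hq.2 hβ hγ ht0.le (sub_nonneg.2 ht1.le) (add_sub_cancel t 1)
    have hle : t * (q γ + (1 - t) * φ ‖β - γ‖) ≤ t * q β := by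
      have hvalue := isMinOn_iff.1 hmin _ hmem
      simp only [smul_eq_mul] at hchord
      linarith
    exact le_of_mul_le_mul_left hle ht0
  have hlim : Filter.Tendsto (fun t : ℝ => q γ + (1 - t) * φ ‖β - γ‖) (nhdsWithin 0 (Set.Ioi 0))
      (nhds (q γ + (1 - 0) * φ ‖β - γ‖)) :=
    Continuous.continuousWithinAt (by fun_prop)
  rw [sub_zero, one_mul] at hlim
  exact le_of_tendsto hlim (Filter.mem_of_superset (Ioo_mem_nhdsGT one_pos) hsegment)

theorem localization_constrained_general (hf : QuasiconvexOn ℝ Q f)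
    (hq : UniformConvexOn Q φ q) (hγ : γ ∈ Q) (hmin : IsMinOn q Q γ) (hr : 0 ≤ r) (hε : ε < φ r)
    (happrox : ∀ β ∈ Q, ‖β - γ‖ = r → (q β - q γ) - (f β - f γ) ≤ ε) :
    (∀ β ∈ Q, f β ≤ f γ → ‖β - γ‖ < r) ∧ (∀ β ∈ Q, IsMinOn f Q β → ‖β - γ‖ < r) := by
  have hsublevel : ∀ β ∈ Q, f β ≤ f γ → ‖β - γ‖ < r := by
    intro β hβ hfβ
    by_contra! hge
    obtain ⟨x, ⟨hx, hfx⟩, hxr : ‖x - γ‖ = r⟩ :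
        r ∈ (fun x => ‖x - γ‖) '' {x ∈ Q | f x ≤ f γ} :=
      (hf (f γ)).isPreconnected.intermediate_value ⟨hγ, le_rfl⟩ ⟨hβ, hfβ⟩ (by fun_prop)
        ⟨by simpa only [sub_self, norm_zero] using hr, hge⟩
    have hgrowth := add_le_of_uniformConvexOn_of_isMinOn hq hγ hmin hx
    rw [hxr] at hgrowth
    linarith [happrox x hx hxr]
  exact ⟨hsublevel, fun β hβ hβmin => hsublevel β hβ (isMinOn_iff.1 hβmin γ hγ)⟩

end UniformConvexity

theorem euclNorm_eq_norm_toLp {p : ℕ} (v : Fin p → ℝ) : euclNorm v = ‖WithLp.toLp 2 v‖ := by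
  simp only [euclNorm, EuclideanSpace.norm_eq, Real.norm_eq_abs, sq_abs]

open scoped MatrixOrder in
theorem mul_dotProduct_self_le_of_le_eigenvalues {n : Type*} [Fintype n] [DecidableEq n]
    {K : Matrix n n ℝ} (hK : K.IsHermitian) {m : ℝ} (hm : ∀ i, m ≤ hK.eigenvalues i)
    (v : n → ℝ) : m * (v ⬝ᵥ v) ≤ v ⬝ᵥ K *ᵥ v := by
  have hle : algebraMap ℝ (Matrix n n ℝ) m ≤ K := by
    refine (algebraMap_le_iff_le_spectrum (ha := hK)).2 fun x hx => ?_
    obtain ⟨i, rfl⟩ := hK.spectrum_real_eq_range_eigenvalues ▸ hx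
    exact hm i
  have hnonneg := (Matrix.le_iff.1 hle).dotProduct_mulVec_nonneg v
  simpa only [star_trivial, sub_mulVec, Algebra.algebraMap_eq_smul_one, smul_mulVec, one_mulVec,
    dotProduct_sub, dotProduct_smul, smul_eq_mul, sub_nonneg] using hnonneg

theorem quadObj_smul_add_smul {p : ℕ} (K : Matrix (Fin p) (Fin p) ℝ) (b x y : Fin p → ℝ)
    {s t : ℝ} (hst : s + t = 1) :
    quadObj K b (s • x + t • y) =
      s * quadObj K b x + t * quadObj K b y - s * t * (1 / 2 * ((x - y) ⬝ᵥ K *ᵥ (x - y))) := by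
  obtain rfl := eq_sub_of_add_eq hst
  simp only [quadObj, mulVec_add, mulVec_sub, mulVec_smul, add_dotProduct, sub_dotProduct,
    dotProduct_add, dotProduct_sub, smul_dotProduct, dotProduct_smul, smul_eq_mul]
  ring

theorem strongConvexOn_quadObj {p : ℕ} {K : Matrix (Fin p) (Fin p) ℝ} (hK : K.IsHermitian)
    {m : ℝ} (hm : ∀ i, m ≤ hK.eigenvalues i) (b : Fin p → ℝ)
    {Q : Set (EuclideanSpace ℝ (Fin p))} (hQ : Convex ℝ Q) :
    StrongConvexOn Q m fun x => quadObj K b (WithLp.ofLp x) := by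
  refine ⟨hQ, fun x _ y _ s t hs ht hst => ?_⟩
  have hrayleigh := mul_dotProduct_self_le_of_le_eigenvalues hK hm (x - y).ofLp
  have hnorm : (x - y).ofLp ⬝ᵥ (x - y).ofLp = ‖x - y‖ ^ 2 := by
    rw [EuclideanSpace.real_norm_sq_eq]
    simp only [dotProduct, sq]
  rw [hnorm, WithLp.ofLp_sub] at hrayleigh
  have hcurvature := mul_le_mul_of_nonneg_left hrayleigh (mul_nonneg hs ht)
  simp only [WithLp.ofLp_add, WithLp.ofLp_smul, quadObj_smul_add_smul K b _ _ hst, smul_eq_mul]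
  linarith

/-- Localization of constrained minimizers under uniform quadratic
approximation: if a convex `f` is within `ε` of the quadratic `q` (up to
constants) on `Q` intersected with the ball of radius `r` around the unique
constrained minimizer `γ` of `q`, with `ε < λ r² / 2` and `λ` the smallest
eigenvalue of `K`, then any point of `Q` at which `f` does not exceed `f(γ)`
lies in the open ball, and in particular so does every minimizer of `f`
over `Q`. -/
theorem localization_constrained {p : ℕ}
    (K : Matrix (Fin p) (Fin p) ℝ) (hsymm : K.IsSymm) (hpd : K.PosDef)
    (lam : ℝ) (hlam : IsLeast (Set.range hpd.1.eigenvalues) lam) (hlam_pos : 0 < lam)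
    (b : Fin p → ℝ) (Q : Set (Fin p → ℝ)) (hne : Q.Nonempty) (hcl : IsClosed Q)
    (hconv : Convex ℝ Q)
    (γ : Fin p → ℝ) (hγQ : γ ∈ Q) (hγmin : ∀ β ∈ Q, quadObj K b γ ≤ quadObj K b β)
    (hγuniq : ∀ γ' ∈ Q, (∀ β ∈ Q, quadObj K b γ' ≤ quadObj K b β) → γ' = γ)
    (f : (Fin p → ℝ) → ℝ) (hf : ConvexOn ℝ Set.univ f)
    (r : ℝ) (hr : 0 < r) (ε : ℝ) (hε0 : 0 ≤ ε) (hε : ε < lam * r ^ 2 / 2)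
    (happrox : ∀ β ∈ Q, euclNorm (β - γ) ≤ r →
      |(f β - f γ) - (quadObj K b β - quadObj K b γ)| ≤ ε) :
    (∀ β ∈ Q, f β ≤ f γ → euclNorm (β - γ) < r) ∧
    (∀ β ∈ Q, (∀ β' ∈ Q, f β ≤ f β') → euclNorm (β - γ) < r) := by
  let coords := (WithLp.linearEquiv 2 ℝ (Fin p → ℝ)).toLinearMap
  have hquasi : QuasiconvexOn ℝ (coords ⁻¹' Q) (f ∘ coords) :=
    ((hf.subset (Set.subset_univ Q) hconv).comp_linearMap coords).quasiconvexOn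
  have hstrong : StrongConvexOn (coords ⁻¹' Q) lam (quadObj K b ∘ coords) :=
    strongConvexOn_quadObj hpd.1 (fun i => hlam.2 ⟨i, rfl⟩) b (hconv.linear_preimage coords)
  simp only [euclNorm_eq_norm_toLp] at happrox ⊢
  obtain ⟨hsublevel, hminimizer⟩ := localization_constrained_general (γ := WithLp.toLp 2 γ)
    (ε := ε) hquasi hstrong hγQ (fun β hβ => hγmin β.ofLp hβ) hr.le (by linarith)
    fun β hβ hβr => sub_le_comm.1 (sub_le_of_abs_sub_le_left (happrox β.ofLp hβ hβr.le))
  exact ⟨fun β hβ => hsublevel (WithLp.toLp 2 β) hβ,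
    fun β hβ hβmin => hminimizer (WithLp.toLp 2 β) hβ fun x hx => hβmin x.ofLp hx⟩
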